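/- Let p be a nonzero real number. The inequality (2/3)·(sinh(x)/x)^p + (1/3)·(tanh(x)/x)^p > 1 holds for every x ∈ (0, ∞) if and only if p > 0 or p ≤ −4/5. -/

import Mathlib

open Real Set

/-- The sign function governing the inequality. -/
noncomputable def hyN (q c : ℝ) : ℝ := 2 * c ^ 2 - q * c ^ q * (c ^ 2 - 1) - c ^ q - (c ^ q) ^ 2

/-- Logarithm of the derivative of `hyF` in terms of `c = cosh x`. -/
noncomputable def hyH (q c : ℝ) : ℝ :=
  (log 3 - log (2 + c ^ q)) / q + log (2 * c ^ 2 + c ^ q) - log c - log (2 + c ^ q)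

noncomputable def hyF (q x : ℝ) : ℝ :=
  sinh x * exp ((log 3 - log (2 + cosh x ^ q)) / q)

lemma hyH_deriv (q c : ℝ) (hq : q ≠ 0) (hc : 0 < c) :
    HasDerivAt (hyH q) (2 * hyN q c / (c * (2 + c ^ q) * (2 * c ^ 2 + c ^ q))) c := by
  have hw : 0 < c ^ q := rpow_pos_of_pos hc q
  have h1 : HasDerivAt (fun c : ℝ => c ^ q) (q * c ^ q / c) c := by
    have := Real.hasDerivAt_rpow_const (x := c) (p := q) (Or.inl hc.ne')
    rw [rpow_sub_one hc.ne'] at this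
    convert this using 1
    ring
  have h2 := (h1.const_add 2).log (by positivity)
  have h3 := ((((hasDerivAt_id c).pow 2).const_mul 2).add h1).log
    (by simp only [id, Pi.add_apply, Pi.pow_apply]; positivity)
  have h4 := Real.hasDerivAt_log hc.ne'
  have h5 := (((((h2.const_sub (log 3)).div_const q).add h3).sub h4).sub h2)
  refine HasDerivAt.congr_deriv (f' := _) (h5.congr_of_eventuallyEq ?_) ?_
  · exact Filter.Eventually.of_forall (fun y => by simp [hyH])
  · simp only [id, hyN, Pi.add_apply, Pi.pow_apply]
    generalize c ^ q = w at *
    field_simp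
    ring

lemma hyF_deriv (q x : ℝ) (hq : q ≠ 0) :
    HasDerivAt (hyF q) (exp (hyH q (cosh x))) x := by
  have hc : 0 < cosh x := cosh_pos x
  have hw : 0 < cosh x ^ q := rpow_pos_of_pos hc q
  have h1 : HasDerivAt (fun x : ℝ => cosh x ^ q) (q * cosh x ^ q / cosh x * sinh x) x := by
    have := (Real.hasDerivAt_cosh x).rpow_const (p := q) (Or.inl hc.ne')
    rw [rpow_sub_one hc.ne'] at this
    convert this using 1
    ring
  have h2 := (h1.const_add 2).log (by positivity)
  have h3 := (Real.hasDerivAt_sinh x).mul (((h2.const_sub (log 3)).div_const q).exp)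
  refine HasDerivAt.congr_deriv (f' := _) (h3.congr_of_eventuallyEq ?_) ?_
  · exact Filter.Eventually.of_forall (fun y => by simp [hyF])
  · unfold hyH
    have hs := Real.sinh_sq x
    rw [exp_sub, exp_sub, exp_add, exp_log hc, exp_log (by positivity), exp_log (by positivity)]
    generalize exp ((log 3 - log (2 + cosh x ^ q)) / q) = E at *
    generalize cosh x ^ q = w at *
    generalize cosh x = c at *
    generalize sinh x = s at *
    field_simp
    rw [hs]
    ring

lemma hy_key (q x : ℝ) (hq : q ≠ 0) (hx : 0 < x) :
    ∃ η, 1 < η ∧ η < cosh x ∧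
      (2 / 3 * (sinh x / x) ^ (-q) + 1 / 3 * (tanh x / x) ^ (-q) > 1 ↔ q * hyN q η < 0) := by
  obtain ⟨ξ, hξ, e1⟩ := exists_hasDerivAt_eq_slope (hyF q) (fun y => exp (hyH q (cosh y))) hx
    (fun y _ => (hyF_deriv q y hq).continuousAt.continuousWithinAt)
    (fun y _ => hyF_deriv q y hq)
  have hc1 : 1 < cosh ξ := one_lt_cosh.2 hξ.1.ne'
  have hcc : cosh ξ < cosh x := by
    rw [cosh_lt_cosh, abs_of_pos hξ.1, abs_of_pos hx]; exact hξ.2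
  obtain ⟨η, hη, e2⟩ := exists_hasDerivAt_eq_slope (hyH q) _ hc1
    (fun y hy => (hyH_deriv q y hq (by linarith [hy.1])).continuousAt.continuousWithinAt)
    (fun y hy => hyH_deriv q y hq (by linarith [hy.1]))
  refine ⟨η, hη.1, hη.2.trans hcc, ?_⟩
  have hη0 : 0 < η := by linarith [hη.1]
  have hwη : 0 < η ^ q := rpow_pos_of_pos hη0 q
  have hs : 0 < sinh x := sinh_pos_iff.2 hx
  have hc : 0 < cosh x := cosh_pos x
  have hw : 0 < cosh x ^ q := rpow_pos_of_pos hc q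
  have hH1 : hyH q 1 = 0 := by
    simp only [hyH, one_rpow, log_one]; norm_num
  have hF0 : hyF q 0 = 0 := by simp [hyF]
  rw [hH1, sub_zero, eq_div_iff (by linarith)] at e2
  rw [hF0, sub_zero, sub_zero, eq_div_iff hx.ne'] at e1
  have e3 : hyH q (cosh ξ) + log x
      = log (sinh x) + (log 3 - log (2 + cosh x ^ q)) / q := by
    have := congrArg log e1
    rw [log_mul (exp_pos _).ne' hx.ne', log_exp, hyF, log_mul hs.ne' (exp_pos _).ne', log_exp] at this
    exact this
  have hT : (tanh x / x) ^ (-q) = (sinh x / x) ^ (-q) * cosh x ^ q := by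
    rw [show tanh x / x = (sinh x / x) * (cosh x)⁻¹ by rw [tanh_eq_sinh_div_cosh]; field_simp,
      mul_rpow (by positivity) (by positivity), inv_rpow hc.le, rpow_neg hc.le, inv_inv]
  have hS : 0 < sinh x / x := by positivity
  have hSq : 0 < (sinh x / x) ^ q := rpow_pos_of_pos hS q
  have step1 : (2 / 3 * (sinh x / x) ^ (-q) + 1 / 3 * (tanh x / x) ^ (-q) > 1) ↔
      (sinh x / x) ^ q * 3 < 2 + cosh x ^ q := by
    rw [hT, rpow_neg hS.le]
    have : 2 / 3 * ((sinh x / x) ^ q)⁻¹ + 1 / 3 * (((sinh x / x) ^ q)⁻¹ * cosh x ^ q)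
      = (2 + cosh x ^ q) / ((sinh x / x) ^ q * 3) := by field_simp
    rw [this, gt_iff_lt, one_lt_div (by positivity)]
  have step2 : (sinh x / x) ^ q * 3 < 2 + cosh x ^ q ↔ q * hyH q (cosh ξ) < 0 := by
    rw [← log_lt_log_iff (by positivity) (by positivity), log_mul hSq.ne' (by norm_num),
      log_rpow hS, log_div hs.ne' hx.ne']
    have : q * hyH q (cosh ξ) = q * (log (sinh x) - log x) + log 3 - log (2 + cosh x ^ q) := by
      rw [eq_sub_of_add_eq e3]; field_simp; ring
    rw [this]
    constructor <;> intro h <;> linarith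
  rw [step1, step2, ← e2]
  have hk : 0 < 2 / (η * (2 + η ^ q) * (2 * η ^ 2 + η ^ q)) * (cosh ξ - 1) :=
    mul_pos (by positivity) (by linarith)
  rw [show q * (2 * hyN q η / (η * (2 + η ^ q) * (2 * η ^ 2 + η ^ q)) * (cosh ξ - 1))
    = (2 / (η * (2 + η ^ q) * (2 * η ^ 2 + η ^ q)) * (cosh ξ - 1)) * (q * hyN q η) by ring]
  rw [mul_neg_iff]
  constructor
  · rintro (h | h)
    · exact h.2
    · linarith [h.1]
  · intro h; exact Or.inl ⟨hk, h⟩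

lemma hyN_pos (q c : ℝ) (hq : q < 0) (hc : 1 < c) : 0 < hyN q c := by
  have hw : 0 < c ^ q := rpow_pos_of_pos (by linarith) q
  have hw1 : c ^ q < 1 := rpow_lt_one_of_one_lt_of_neg hc hq
  unfold hyN
  have : 0 < (-q) * c ^ q * (c ^ 2 - 1) :=
    mul_pos (mul_pos (by linarith) hw) (by nlinarith)
  nlinarith

lemma hyN_neg (q c : ℝ) (hq : 4 / 5 ≤ q) (hc : 1 < c) : hyN q c < 0 := by
  have hc0 : 0 < c := by linarith
  have hmono : c ^ (4 / 5 : ℝ) ≤ c ^ q := rpow_le_rpow_of_exponent_le hc.le hq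
  obtain ⟨t, ht1, htc, htw⟩ : ∃ t : ℝ, 1 < t ∧ c ^ 2 = t ^ 5 ∧ c ^ (4 / 5 : ℝ) = t ^ 2 := by
    refine ⟨c ^ (2 / 5 : ℝ), one_lt_rpow hc (by norm_num), ?_, ?_⟩
    · rw [← rpow_natCast, ← rpow_natCast, ← rpow_mul hc0.le]; norm_num
    · rw [← rpow_natCast, ← rpow_mul hc0.le]; norm_num
  unfold hyN
  rw [htw] at hmono
  rw [htc]
  have ht5 : 0 < t ^ 5 - 1 := by
    have := one_lt_pow₀ ht1 (n := 5) (by norm_num)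
    linarith
  have h1 : 4 / 5 * t ^ 2 * (t ^ 5 - 1) ≤ q * c ^ q * (t ^ 5 - 1) :=
    mul_le_mul_of_nonneg_right (mul_le_mul hq hmono (by positivity) (by linarith)) ht5.le
  have h2 : (t ^ 2) ^ 2 ≤ (c ^ q) ^ 2 := pow_le_pow_left₀ (by positivity) hmono 2
  have h3 : 0 < t ^ 2 * ((t - 1) ^ 2 * (4 * t ^ 3 + 8 * t ^ 2 + 2 * t + 1)) := by
    have : 0 < t - 1 := by linarith
    positivity
  nlinarith

lemma hyN_small (q : ℝ) (hq : q < 4 / 5) : ∃ b, 1 < b ∧ ∀ c, 1 < c → c < b → 0 < hyN q c := by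
  have h1 : HasDerivAt (fun c : ℝ => c ^ q) q 1 := by
    have := Real.hasDerivAt_rpow_const (x := 1) (p := q) (Or.inl one_ne_zero)
    simpa using this
  have h2 := (hasDerivAt_id (1 : ℝ)).pow 2
  have h3 := (((h2.const_mul 2).sub ((h1.const_mul q).mul (h2.sub_const 1))).sub h1).sub (h1.pow 2)
  have h4 : HasDerivAt (hyN q) (4 - 5 * q) 1 := by
    refine HasDerivAt.congr_deriv (f' := _) (h3.congr_of_eventuallyEq ?_) ?_
    · exact Filter.Eventually.of_forall (fun y => by simp [hyN])
    · simp; ring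
  have h5 := (hasDerivAt_iff_tendsto_slope.1 h4).eventually (lt_mem_nhds (by linarith : 0 < 4 - 5 * q))
  have h6 := h5.filter_mono (nhdsWithin_mono (1 : ℝ) (fun y (hy : y ∈ Ioi (1 : ℝ)) => ne_of_gt hy))
  obtain ⟨b, hb, hb'⟩ := mem_nhdsGT_iff_exists_Ioo_subset.1 h6
  refine ⟨b, hb, fun c hc hcb => ?_⟩
  have := hb' ⟨hc, hcb⟩
  simp only [mem_ofPred_eq, slope_def_field] at this
  have hN1 : hyN q 1 = 0 := by simp [hyN]; norm_num
  rw [hN1, sub_zero] at this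
  have h0 : 0 < c - 1 := by linarith
  exact (div_pos_iff_of_pos_right h0).1 this

theorem huygens_hyp (p : ℝ) (hp : p ≠ 0) :
    (∀ x ∈ Ioi (0 : ℝ),
        2 / 3 * (sinh x / x) ^ p + 1 / 3 * (tanh x / x) ^ p > 1) ↔
      (0 < p ∨ p ≤ -(4 / 5)) := by
  constructor
  · intro h
    by_contra! hcon
    obtain ⟨h1, h2⟩ := hcon
    have hp0 : p < 0 := lt_of_le_of_ne h1 hp
    obtain ⟨b, hb, hN⟩ := hyN_small (-p) (by linarith)
    have hx : 0 < arcosh b := arcosh_pos hb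
    obtain ⟨η, hη1, hη2, hiff⟩ := hy_key (-p) (arcosh b) (neg_ne_zero.2 hp) hx
    rw [cosh_arcosh hb.le] at hη2
    rw [neg_neg] at hiff
    have := hiff.1 (h _ hx)
    nlinarith [hN η hη1 hη2]
  · intro h x hx
    obtain ⟨η, hη1, hη2, hiff⟩ := hy_key (-p) x (neg_ne_zero.2 hp) hx
    rw [neg_neg] at hiff
    rw [hiff]
    rcases h with h | h
    · exact mul_neg_of_neg_of_pos (by linarith) (hyN_pos _ _ (by linarith) hη1)
    · exact mul_neg_of_pos_of_neg (by linarith) (hyN_neg _ _ (by linarith) hη1)
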